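/- Let n be a positive integer and let B be an n×n real matrix all of whose entries lie in the interval [0,1]. Then the largest singular value of B is at most n. Moreover, let K, d be positive integers, let μ, ν ∈ ℝ^{K×d} and γ > 0 be such that every eigenvalue of μᵀμ and every eigenvalue of νᵀν is at least γ, let τ : {1,…,n} → {1,…,K}, let α > 0 be such that |τ⁻¹(k)| ≥ αn for every k, and let X, Y ∈ ℝ^{n×d} be defined by X_{i,·} = μ_{τ(i),·} and Y_{i,·} = ν_{τ(i),·}. Then the d-th largest singular value of XYᵀ is at least αγn. -/

import Mathlib

open Matrix

/-- The eigenvalues of a Hermitian (real symmetric) matrix, listed in nonincreasing order: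
`eigsDesc hA k` is the `(k+1)`-st largest eigenvalue of `A`. -/
noncomputable def eigsDesc {n : ℕ} {A : Matrix (Fin n) (Fin n) ℝ} (hA : A.IsHermitian) :
    Fin n → ℝ :=
  fun k => hA.eigenvalues (Tuple.sort hA.eigenvalues k.rev)

/-- `svalue A k` is the `(k+1)`-st largest singular value of the real square matrix `A`
(so `svalue A 0` is the largest singular value), defined as the square root of the
`(k+1)`-st largest eigenvalue of `A * Aᴴ`; it is `0` if `k ≥ n`. -/
noncomputable def svalue {n : ℕ} (A : Matrix (Fin n) (Fin n) ℝ) (k : ℕ) : ℝ :=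
  if h : k < n then
    Real.sqrt (eigsDesc (Matrix.isHermitian_mul_conjTranspose_self A) ⟨k, h⟩)
  else 0

theorem spec_aux {n : ℕ} {A : Matrix (Fin n) (Fin n) ℝ} (hA : A.IsHermitian) :
    ∃ U : Matrix (Fin n) (Fin n) ℝ, U * Uᵀ = 1 ∧ Uᵀ * U = 1 ∧
      A = U * Matrix.diagonal hA.eigenvalues * Uᵀ := by
  refine ⟨hA.eigenvectorUnitary, ?_, ?_, ?_⟩
  · have := Unitary.coe_mul_star_self hA.eigenvectorUnitary
    simpa [Matrix.star_eq_conjTranspose] using this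
  · have := Unitary.coe_star_mul_self hA.eigenvectorUnitary
    simpa [Matrix.star_eq_conjTranspose] using this
  · have := hA.spectral_theorem
    rw [Unitary.conjStarAlgAut_apply] at this
    simpa [Matrix.star_eq_conjTranspose, Function.comp_def] using this

theorem quad_aux {n : ℕ} {A : Matrix (Fin n) (Fin n) ℝ} (hA : A.IsHermitian) :
    ∃ U : Matrix (Fin n) (Fin n) ℝ, U * Uᵀ = 1 ∧ Uᵀ * U = 1 ∧
      (∀ x, x ⬝ᵥ x = ∑ i, (Uᵀ *ᵥ x) i ^ 2) ∧
      (∀ x, x ⬝ᵥ (A *ᵥ x) = ∑ i, hA.eigenvalues i * (Uᵀ *ᵥ x) i ^ 2) ∧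
      ∀ i, A *ᵥ (U.col i) = hA.eigenvalues i • U.col i := by
  obtain ⟨U, h1, h2, h3⟩ := spec_aux hA
  generalize hA.eigenvalues = l at *
  refine ⟨U, h1, h2, ?_, ?_, ?_⟩
  · intro x
    have : x ⬝ᵥ x = (Uᵀ *ᵥ x) ⬝ᵥ (Uᵀ *ᵥ x) := by
      rw [Matrix.dotProduct_mulVec, Matrix.vecMul_transpose, Matrix.mulVec_mulVec, h1,
        Matrix.one_mulVec]
    rw [this]; simp [dotProduct, pow_two]
  · intro x
    have : x ⬝ᵥ (A *ᵥ x) = (Uᵀ *ᵥ x) ⬝ᵥ (Matrix.diagonal l *ᵥ (Uᵀ *ᵥ x)) := by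
      rw [h3, Matrix.mul_assoc, ← Matrix.mulVec_mulVec, ← Matrix.mulVec_mulVec,
        Matrix.dotProduct_mulVec, ← Matrix.mulVec_transpose]
    rw [this]
    simp only [dotProduct, Matrix.mulVec_diagonal]
    exact Finset.sum_congr rfl fun i _ => by ring
  · intro i
    have : A * U = U * Matrix.diagonal l := by
      rw [h3, Matrix.mul_assoc, h2, Matrix.mul_one]
    ext j
    have := congrFun (congrFun this j) i
    rw [Matrix.mul_diagonal] at this
    simp only [Pi.smul_apply, smul_eq_mul, Matrix.col_apply]
    rw [mul_comm, ← this]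
    rfl

theorem dot_self_pos {m : ℕ} {v : Fin m → ℝ} (h : v ≠ 0) : 0 < v ⬝ᵥ v := by
  have h0 : 0 ≤ v ⬝ᵥ v := Finset.sum_nonneg fun i _ => mul_self_nonneg _
  exact lt_of_le_of_ne h0 fun e => h (dotProduct_self_eq_zero.1 e.symm)

theorem dot_gram {m k : ℕ} (M : Matrix (Fin m) (Fin k) ℝ) (v : Fin k → ℝ) :
    v ⬝ᵥ ((Mᵀ * M) *ᵥ v) = (M *ᵥ v) ⬝ᵥ (M *ᵥ v) := by
  rw [← Matrix.mulVec_mulVec, Matrix.dotProduct_mulVec, Matrix.vecMul_transpose]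

theorem rayleigh_lower {K d : ℕ} (M : Matrix (Fin K) (Fin d) ℝ) (γ : ℝ)
    (h : ∀ (lam : ℝ) (v : Fin d → ℝ), v ≠ 0 → (Mᵀ * M) *ᵥ v = lam • v → γ ≤ lam)
    (v : Fin d → ℝ) : γ * (v ⬝ᵥ v) ≤ (M *ᵥ v) ⬝ᵥ (M *ᵥ v) := by
  have hA : (Mᵀ * M).IsHermitian := by
    simpa using Matrix.isHermitian_conjTranspose_mul_self M
  obtain ⟨U, h1, h2, hn, hq, he⟩ := quad_aux hA
  rw [← dot_gram, hq, hn, Finset.mul_sum]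
  refine Finset.sum_le_sum fun i _ => mul_le_mul_of_nonneg_right ?_ (sq_nonneg _)
  refine h _ (U.col i) ?_ (he i)
  intro h0
  have := congrFun (congrFun h2 i) i
  have h0' : ∀ j, U j i = 0 := fun j => congrFun h0 j
  simp [Matrix.mul_apply, h0'] at this

theorem eigs_upper {n : ℕ} (B : Matrix (Fin n) (Fin n) ℝ)
    (hB : ∀ i j, B i j ∈ Set.Icc (0 : ℝ) 1) (hA : (B * Bᴴ).IsHermitian) (i : Fin n) :
    hA.eigenvalues i ≤ (n : ℝ) ^ 2 := by
  obtain ⟨U, h1, h2, hn, hq, he⟩ := quad_aux hA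
  have hu : U.col i ⬝ᵥ U.col i = 1 := by
    have := congrFun (congrFun h2 i) i
    simpa [Matrix.mul_apply, dotProduct] using this
  have e : hA.eigenvalues i = (Bᵀ *ᵥ U.col i) ⬝ᵥ (Bᵀ *ᵥ U.col i) := by
    have := dot_gram Bᵀ (U.col i)
    rw [← this, Matrix.transpose_transpose, ← Matrix.conjTranspose_eq_transpose_of_trivial, he i,
      dotProduct_smul, hu]
    simp
  rw [e]
  have hj : ∀ j, (Bᵀ *ᵥ U.col i) j * (Bᵀ *ᵥ U.col i) j ≤ n := by
    intro j
    have cs := Finset.sum_mul_sq_le_sq_mul_sq Finset.univ (fun k => B k j) (fun k => U k i)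
    have e1 : ∑ k, U k i ^ 2 = 1 := by
      rw [← hu]; simp [dotProduct, pow_two]
    have e2 : ∑ k, B k j ^ 2 ≤ (n : ℝ) := by
      calc ∑ k, B k j ^ 2 ≤ ∑ k : Fin n, (1 : ℝ) :=
            Finset.sum_le_sum fun k _ => pow_le_one₀ (hB k j).1 (hB k j).2
        _ = n := by simp
    rw [e1, mul_one] at cs
    rw [← pow_two]
    exact le_trans cs e2
  calc _ ≤ ∑ j : Fin n, (n : ℝ) := Finset.sum_le_sum fun j _ => hj j
    _ = _ := by simp [pow_two]

theorem eigs_lower {n d : ℕ} {A : Matrix (Fin n) (Fin n) ℝ} (hA : A.IsHermitian)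
    (X : Matrix (Fin n) (Fin d) ℝ) (c : ℝ) (hinj : ∀ a, a ≠ 0 → X *ᵥ a ≠ 0)
    (hc : ∀ a, c * ((X *ᵥ a) ⬝ᵥ (X *ᵥ a)) ≤ (X *ᵥ a) ⬝ᵥ (A *ᵥ (X *ᵥ a)))
    (k : Fin n) (hk : (k : ℕ) < d) : c ≤ eigsDesc hA k := by
  by_contra! hlt
  obtain ⟨U, h1, h2, hn, hq, he⟩ := quad_aux hA
  unfold eigsDesc at hlt
  set l := hA.eigenvalues with hl
  have hmono : Monotone (l ∘ Tuple.sort l) := Tuple.monotone_sort l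
  let S := {i : Fin n // c ≤ l i}
  have hcard : Fintype.card S < d := by
    refine lt_of_le_of_lt ?_ hk
    have : Function.Injective (fun s : S => (⟨((Tuple.sort l).symm s.1).rev, by
        rw [← Fin.lt_def]
        by_contra! hh
        have h3 : (Tuple.sort l).symm s.1 ≤ k.rev := by
          rw [← Fin.rev_le_rev, Fin.rev_rev]; exact hh
        have := hmono h3
        simp only [Function.comp, Equiv.apply_symm_apply] at this
        linarith [s.2]⟩ : Fin k)) := by
      intro s t hst
      simp only [Fin.mk.injEq] at hst
      have := Fin.rev_injective (Fin.ext hst)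
      exact Subtype.ext ((Tuple.sort l).symm.injective this)
    simpa using Fintype.card_le_of_injective _ this
  let f : (Fin d → ℝ) →ₗ[ℝ] (S → ℝ) :=
    (LinearMap.funLeft ℝ ℝ (Subtype.val : S → Fin n)) ∘ₗ (Uᵀ * X).mulVecLin
  have hker : LinearMap.ker f ≠ ⊥ := by
    apply LinearMap.ker_ne_bot_of_finrank_lt
    simpa using hcard
  obtain ⟨a, ha, ha0⟩ := Submodule.exists_mem_ne_zero_of_ne_bot hker
  have hfa : ∀ i, c ≤ l i → (Uᵀ *ᵥ (X *ᵥ a)) i = 0 := by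
    intro i hi
    have := congrFun (LinearMap.mem_ker.1 ha) ⟨i, hi⟩
    rw [Matrix.mulVec_mulVec]
    exact this
  have hpos := dot_self_pos (hinj a ha0)
  have h4 := hc a
  rw [hq] at h4
  rw [hn] at h4 hpos
  rw [Finset.mul_sum] at h4
  obtain ⟨i, _, hi⟩ := Finset.exists_lt_of_sum_lt (s := Finset.univ)
    (f := fun _ => (0:ℝ)) (lt_of_eq_of_lt Finset.sum_const_zero hpos)
  refine absurd h4 (not_le.2 ?_)
  refine Finset.sum_lt_sum ?_ ⟨i, Finset.mem_univ _, ?_⟩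
  · intro j _
    by_cases hj : c ≤ l j
    · simp [hfa j hj]
    · exact mul_le_mul_of_nonneg_right (le_of_not_ge hj) (sq_nonneg _)
  · by_cases hj : c ≤ l i
    · simp [hfa i hj] at hi
    · exact mul_lt_mul_of_pos_right (not_le.1 hj) hi

theorem block_lower {n K d : ℕ} (μ : Matrix (Fin K) (Fin d) ℝ) (γ : ℝ)
    (h : ∀ (lam : ℝ) (v : Fin d → ℝ), v ≠ 0 → (μᵀ * μ) *ᵥ v = lam • v → γ ≤ lam)
    (τ : Fin n → Fin K) (α : ℝ) (hα : 0 < α)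
    (hτ : ∀ k, α * n ≤ ((Finset.univ.filter fun i => τ i = k).card : ℝ))
    (X : Matrix (Fin n) (Fin d) ℝ) (hX : ∀ i, X i = μ (τ i)) (a : Fin d → ℝ) :
    α * γ * n * (a ⬝ᵥ a) ≤ (X *ᵥ a) ⬝ᵥ (X *ᵥ a) := by
  have h1 := rayleigh_lower μ γ h a
  have h2 : (X *ᵥ a) ⬝ᵥ (X *ᵥ a) = ∑ k, ((Finset.univ.filter fun i => τ i = k).card : ℝ) *
      ((μ *ᵥ a) k * (μ *ᵥ a) k) := by
    have : ∀ i, (X *ᵥ a) i = (μ *ᵥ a) (τ i) := fun i => by simp [Matrix.mulVec, hX]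
    simp only [dotProduct, this]
    rw [← Finset.sum_fiberwise Finset.univ τ]
    refine Finset.sum_congr rfl fun k _ => ?_
    rw [Finset.sum_congr rfl (g := fun _ => (μ *ᵥ a) k * (μ *ᵥ a) k), Finset.sum_const,
      nsmul_eq_mul]
    intro i hi
    rw [(Finset.mem_filter.1 hi).2]
  calc α * γ * n * (a ⬝ᵥ a) = α * n * (γ * (a ⬝ᵥ a)) := by ring
    _ ≤ α * n * ((μ *ᵥ a) ⬝ᵥ (μ *ᵥ a)) := by gcongr
    _ ≤ _ := by
      rw [h2, dotProduct, Finset.mul_sum]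
      exact Finset.sum_le_sum fun k _ => mul_le_mul_of_nonneg_right (hτ k) (mul_self_nonneg _)

/-- a matrix with entries in `[0,1]` has largest singular value at most `n`;
and the `d`-th largest singular value of `X * Yᵀ` is at least `α * γ * n`. -/
theorem stmt0 {n K d : ℕ} (hn : 0 < n) (hK : 0 < K) (hd : 0 < d)
    (B : Matrix (Fin n) (Fin n) ℝ) (hB : ∀ i j, B i j ∈ Set.Icc (0 : ℝ) 1)
    (μ ν : Matrix (Fin K) (Fin d) ℝ) (γ : ℝ) (hγ : 0 < γ)
    (hμ : ∀ (lam : ℝ) (v : Fin d → ℝ), v ≠ 0 → (μᵀ * μ) *ᵥ v = lam • v → γ ≤ lam)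
    (hν : ∀ (lam : ℝ) (v : Fin d → ℝ), v ≠ 0 → (νᵀ * ν) *ᵥ v = lam • v → γ ≤ lam)
    (τ : Fin n → Fin K) (α : ℝ) (hα : 0 < α)
    (hτ : ∀ k, α * n ≤ ((Finset.univ.filter fun i => τ i = k).card : ℝ))
    (X Y : Matrix (Fin n) (Fin d) ℝ)
    (hX : ∀ i, X i = μ (τ i)) (hY : ∀ i, Y i = ν (τ i)) :
    svalue B 0 ≤ n ∧ α * γ * n ≤ svalue (X * Yᵀ) (d - 1) := by
  constructor
  · rw [svalue, dif_pos hn]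
    refine Real.sqrt_le_iff.2 ⟨by positivity, ?_⟩
    exact eigs_upper B hB _ _
  · set g := α * γ * n with hg
    have hnR : (0 : ℝ) < n := by exact_mod_cast hn
    have hgpos : 0 < g := by positivity
    have bX : ∀ a, g * (a ⬝ᵥ a) ≤ (X *ᵥ a) ⬝ᵥ (X *ᵥ a) := block_lower μ γ hμ τ α hα hτ X hX
    have bY : ∀ a, g * (a ⬝ᵥ a) ≤ (Y *ᵥ a) ⬝ᵥ (Y *ᵥ a) := block_lower ν γ hν τ α hα hτ Y hY
    have hinj : ∀ a, a ≠ 0 → X *ᵥ a ≠ 0 := by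
      intro a ha h0
      have := bX a
      rw [h0] at this
      have := mul_pos hgpos (dot_self_pos ha)
      simp at *
      linarith
    have hdn : d ≤ n := by
      have hi : Function.Injective X.mulVecLin := by
        rw [← LinearMap.ker_eq_bot, LinearMap.ker_eq_bot']
        intro a ha
        by_contra h
        exact hinj a h ha
      simpa using LinearMap.finrank_le_finrank_of_injective hi
    rw [svalue, dif_pos (by omega)]
    refine Real.le_sqrt_of_sq_le ?_
    refine eigs_lower _ X (g ^ 2) hinj ?_ _ (by simp; omega)
    intro a
    set w := X *ᵥ a with hw
    set z := Xᵀ *ᵥ w with hz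
    have e1 : w ⬝ᵥ ((X * Yᵀ * (X * Yᵀ)ᴴ) *ᵥ w) = (Y *ᵥ z) ⬝ᵥ (Y *ᵥ z) := by
      have := dot_gram (X * Yᵀ)ᵀ w
      rw [Matrix.transpose_transpose] at this
      rw [Matrix.conjTranspose_eq_transpose_of_trivial, this, Matrix.transpose_mul,
        Matrix.transpose_transpose, ← Matrix.mulVec_mulVec]
    rw [e1]
    have e2 : w ⬝ᵥ w = a ⬝ᵥ z := by
      rw [hz, hw, Matrix.mulVec_mulVec, dot_gram]
    have cs : (a ⬝ᵥ z) ^ 2 ≤ (a ⬝ᵥ a) * (z ⬝ᵥ z) := by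
      have := Finset.sum_mul_sq_le_sq_mul_sq Finset.univ a z
      simpa [dotProduct, pow_two] using this
    have hzz : g * (w ⬝ᵥ w) ≤ z ⬝ᵥ z := by
      have hz0 : 0 ≤ z ⬝ᵥ z := Finset.sum_nonneg fun i _ => mul_self_nonneg _
      have hw0 : 0 ≤ w ⬝ᵥ w := Finset.sum_nonneg fun i _ => mul_self_nonneg _
      rcases hw0.eq_or_lt with h | h
      · rw [← h]; simpa using hz0
      · rw [← e2] at cs
        have h5 := mul_le_mul_of_nonneg_right (bX a) hz0
        have h6 := mul_le_mul_of_nonneg_left cs hgpos.le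
        have : (w ⬝ᵥ w) * (g * (w ⬝ᵥ w)) ≤ (w ⬝ᵥ w) * (z ⬝ᵥ z) := by
          calc _ = g * (w ⬝ᵥ w) ^ 2 := by ring
            _ ≤ _ := h6
            _ = g * (a ⬝ᵥ a) * (z ⬝ᵥ z) := by ring
            _ ≤ _ := h5
        exact le_of_mul_le_mul_left this h
    calc g ^ 2 * (w ⬝ᵥ w) = g * (g * (w ⬝ᵥ w)) := by ring
      _ ≤ g * (z ⬝ᵥ z) := by gcongr
      _ ≤ _ := bY z
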